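/- For every fixed τ ≥ 0, the rescaled correlation function of the Lamperti transform of integrated fractional Brownian motion satisfies lim_{H→1⁻} ρ_H(τ/(1−H)) = e^{−τ}, where for H ∈ (0,1) and s ≥ 0, ρ_H(s) := (1+H)(e^{−Hs}+e^{Hs})/(1+2H) + (e^{s/2}−e^{−s/2})^{2(1+H)}/(2(1+2H)) − (e^{(1+H)s}+e^{−(1+H)s})/(2(1+2H)). (At τ = 0 interpret ρ_H(τ/(1−H)) as ρ_H(0) = 1.) -/

import Mathlib

/-!
Write `u = exp (-s)` and `p = 2 * (1 + H)`. Since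
`(exp (s/2) - exp (-s/2)) ^ p = exp ((1 + H) * s) * (1 - u) ^ p`, the terms of order
`exp ((1 + H) * s)` and `exp (H * s)` in `rhoIFBM H s` cancel, and what is left is
`exp ((H - 1) * s)` times `((1 - u) ^ p - 1 + p * u) / u ^ 2 / (2 * (1 + 2 * H))`, up to terms that
vanish as `s → ∞` (`rhoIFBM_eq`). With `s = τ / (1 - H)` and `τ > 0` the prefactor is exactly
`exp (-τ)`, while `u → 0` and `p → 4`, so the second-order Taylor quotient tends to
`4 * 3 / 2 = 6` and the denominator to `6`. As the exponent `p` moves with `u`, the Taylor quotient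
is computed jointly in `(p, u)` by composing the expansions of `exp` and `log` (`tendsto_quot`).
For `τ = 0` the function is constantly `1`.
-/

open Real Filter Topology

/-- Correlation function of the normalized Lamperti transform of integrated
fractional Brownian motion with Hurst parameter `H`. -/
noncomputable def rhoIFBM (H s : ℝ) : ℝ :=
  (1 + H) * (Real.exp (-H * s) + Real.exp (H * s)) / (1 + 2 * H)
    + (Real.exp (s / 2) - Real.exp (-s / 2)) ^ (2 * (1 + H)) / (2 * (1 + 2 * H))
    - (Real.exp ((1 + H) * s) + Real.exp (-(1 + H) * s)) / (2 * (1 + 2 * H))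

lemma tendsto_exp_quot :
    Tendsto (fun x : ℝ => (Real.exp x - 1 - x) / x ^ 2) (𝓝[≠] 0) (𝓝 (1 / 2)) := by
  rw [tendsto_iff_norm_sub_tendsto_zero]
  have hb : Tendsto (fun x : ℝ => |x|) (𝓝[≠] 0) (𝓝 0) := by
    have : Tendsto (fun x : ℝ => |x|) (𝓝 0) (𝓝 |0|) := continuous_abs.tendsto 0
    rw [abs_zero] at this
    exact this.mono_left nhdsWithin_le_nhds
  refine squeeze_zero' (Eventually.of_forall fun _ => norm_nonneg _) ?_ hb
  filter_upwards [self_mem_nhdsWithin, hb.eventually (gt_mem_nhds one_pos)] with x hx h1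
  have hx : x ≠ 0 := hx
  have h := Real.exp_bound h1.le (n := 3) (by norm_num)
  simp only [Finset.sum_range_succ, Finset.sum_range_zero, Nat.factorial] at h
  norm_num at h
  have e : (Real.exp x - 1 - x) / x ^ 2 - 1 / 2 = (Real.exp x - (1 + x + x ^ 2 / 2)) / x ^ 2 := by
    field_simp
    ring
  rw [e, Real.norm_eq_abs, abs_div, abs_of_pos (by positivity : 0 < x ^ 2),
    div_le_iff₀ (by positivity)]
  have : |x| * x ^ 2 = |x| ^ 3 := by rw [← sq_abs x]; ring
  rw [this]
  have := pow_nonneg (abs_nonneg x) 3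
  linarith

lemma tendsto_log_quot :
    Tendsto (fun u : ℝ => (Real.log (1 - u) + u) / u ^ 2) (𝓝[>] 0) (𝓝 (-1 / 2)) := by
  rw [tendsto_iff_norm_sub_tendsto_zero]
  have hid : Tendsto (fun u : ℝ => u) (𝓝[>] 0) (𝓝 0) := nhdsWithin_le_nhds
  have hb : Tendsto (fun u : ℝ => u / (1 - u)) (𝓝[>] 0) (𝓝 0) := by
    have h := hid.div (hid.const_sub 1) (by norm_num : (1 : ℝ) - 0 ≠ 0)
    rw [zero_div] at h
    exact h
  refine squeeze_zero' (Eventually.of_forall fun _ => norm_nonneg _) ?_ hb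
  filter_upwards [self_mem_nhdsWithin, hid.eventually (gt_mem_nhds one_pos)] with u hu h1
  have hu : 0 < u := hu
  have h := Real.abs_log_sub_add_sum_range_le (x := u) (by rwa [abs_of_pos hu]) 2
  simp only [Finset.sum_range_succ, Finset.sum_range_zero, abs_of_pos hu] at h
  norm_num at h
  have e : (Real.log (1 - u) + u) / u ^ 2 - -1 / 2 = (u + u ^ 2 / 2 + Real.log (1 - u)) / u ^ 2 := by
    field_simp
    ring
  rw [e, Real.norm_eq_abs, abs_div, abs_of_pos (by positivity : 0 < u ^ 2),
    div_le_iff₀ (by positivity)]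
  refine h.trans (le_of_eq ?_)
  ring

/-- Second-order Taylor quotient of `(1 - u) ^ p` at `u = 0`, with an exponent that varies
along the filter. -/
lemma tendsto_quot {α : Type*} {l : Filter α} {p u : α → ℝ} {a : ℝ}
    (hp : Tendsto p l (𝓝 a)) (hu : Tendsto u l (𝓝[>] 0)) (hp0 : ∀ᶠ x in l, 0 < p x) :
    Tendsto (fun x => ((1 - u x) ^ (p x) - 1 + p x * u x) / u x ^ 2) l
      (𝓝 (a * (a - 1) / 2)) := by
  have hu0 : Tendsto u l (𝓝 0) := hu.mono_right nhdsWithin_le_nhds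
  have hpos : ∀ᶠ x in l, 0 < u x := hu.eventually self_mem_nhdsWithin
  have hlt : ∀ᶠ x in l, u x < 1 := hu0.eventually (gt_mem_nhds one_pos)
  have hL2 := tendsto_log_quot.comp hu
  have hL1 : Tendsto (fun x => Real.log (1 - u x) / u x) l (𝓝 (-1)) := by
    have h := (hL2.mul hu0).sub_const 1
    rw [show (-1 / 2 * 0 - 1 : ℝ) = -1 by norm_num] at h
    refine h.congr' ?_
    filter_upwards [hpos] with x hx
    simp only [Function.comp]
    field_simp
    ring
  have hX : Tendsto (fun x => p x * Real.log (1 - u x)) l (𝓝[≠] 0) := by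
    refine tendsto_nhdsWithin_iff.2 ⟨?_, ?_⟩
    · have h := hp.mul (hL1.mul hu0)
      rw [show a * (-1 * 0) = 0 by ring] at h
      refine h.congr' ?_
      filter_upwards [hpos] with x hx
      field_simp
    · filter_upwards [hpos, hlt, hp0] with x h0 h1 h2
      exact (mul_neg_of_pos_of_neg h2 (Real.log_neg (by linarith) (by linarith))).ne
  have h := ((tendsto_exp_quot.comp hX).mul ((hp.mul hL1).pow 2)).add (hp.mul hL2)
  rw [show 1 / 2 * (a * -1) ^ 2 + a * (-1 / 2) = a * (a - 1) / 2 by ring] at h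
  refine h.congr' ?_
  filter_upwards [hpos, hlt, hp0] with x h0 h1 h2
  have hl : Real.log (1 - u x) ≠ 0 := (Real.log_neg (by linarith) (by linarith)).ne
  simp only [Function.comp]
  rw [Real.rpow_def_of_pos (by linarith), mul_comm (Real.log (1 - u x)) (p x)]
  field_simp
  ring

lemma rhoIFBM_eq {H s : ℝ} (hH : 0 < H) (hs : 0 < s) :
    rhoIFBM H s = (1 + H) / (1 + 2 * H) * Real.exp (-(H * s))
      - Real.exp (-((1 + H) * s)) / (2 * (1 + 2 * H))
      + Real.exp ((H - 1) * s) *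
        (((1 - Real.exp (-s)) ^ (2 * (1 + H)) - 1 + 2 * (1 + H) * Real.exp (-s)) /
          Real.exp (-s) ^ 2) / (2 * (1 + 2 * H)) := by
  have h1 : Real.exp (s / 2) - Real.exp (-s / 2) = Real.exp (s / 2) * (1 - Real.exp (-s)) := by
    rw [mul_sub, ← Real.exp_add]; ring_nf
  have h2 : (Real.exp (s / 2) - Real.exp (-s / 2)) ^ (2 * (1 + H))
      = Real.exp ((1 + H) * s) * (1 - Real.exp (-s)) ^ (2 * (1 + H)) := by
    have : Real.exp (-s) ≤ 1 := Real.exp_le_one_iff.2 (by linarith)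
    rw [h1, Real.mul_rpow (Real.exp_pos _).le (by linarith), ← Real.exp_mul]
    ring_nf
  have h3 : Real.exp ((H - 1) * s) = Real.exp ((1 + H) * s) * Real.exp (-s) ^ 2 := by
    rw [← Real.exp_nat_mul, ← Real.exp_add]; push_cast; ring_nf
  have h4 : Real.exp (H * s) = Real.exp ((1 + H) * s) * Real.exp (-s) := by
    rw [← Real.exp_add]; ring_nf
  have hu := (Real.exp_pos (-s)).ne'
  have hd : 1 + 2 * H ≠ 0 := by positivity
  unfold rhoIFBM
  rw [h2, h3, h4, neg_mul, neg_mul]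
  field_simp
  ring

theorem stmt1 (τ : ℝ) (hτ : 0 ≤ τ) :
    Tendsto (fun H : ℝ => rhoIFBM H (τ / (1 - H))) (𝓝[<] 1) (𝓝 (Real.exp (-τ))) := by
  have hid : Tendsto (fun H : ℝ => H) (𝓝[<] 1) (𝓝 1) := nhdsWithin_le_nhds
  have hH0 : ∀ᶠ H : ℝ in 𝓝[<] 1, 0 < H := hid.eventually (lt_mem_nhds one_pos)
  have hH1 : ∀ᶠ H : ℝ in 𝓝[<] 1, H < 1 := self_mem_nhdsWithin
  rcases hτ.eq_or_lt with rfl | hτ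
  · refine tendsto_const_nhds.congr' ?_
    filter_upwards [hH0] with H hH
    have hd : 1 + 2 * H ≠ 0 := by positivity
    have hp : 2 * (1 + H) ≠ 0 := by positivity
    simp only [rhoIFBM, zero_div, neg_zero, mul_zero, Real.exp_zero, sub_self,
      Real.zero_rpow hp]
    field_simp
    ring
  have hε : Tendsto (fun H : ℝ => 1 - H) (𝓝[<] 1) (𝓝[>] 0) := by
    refine tendsto_nhdsWithin_iff.2 ⟨by simpa using hid.const_sub 1, ?_⟩
    filter_upwards [hH1] with H h
    exact sub_pos.2 h
  have hs : Tendsto (fun H : ℝ => τ / (1 - H)) (𝓝[<] 1) atTop := by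
    simpa [div_eq_mul_inv] using (tendsto_inv_nhdsGT_zero.comp hε).const_mul_atTop hτ
  have hu : Tendsto (fun H : ℝ => Real.exp (-(τ / (1 - H)))) (𝓝[<] 1) (𝓝[>] 0) :=
    tendsto_nhdsWithin_iff.2
      ⟨Real.tendsto_exp_neg_atTop_nhds_zero.comp hs, Eventually.of_forall fun _ => Real.exp_pos _⟩
  have hp : Tendsto (fun H : ℝ => 2 * (1 + H)) (𝓝[<] 1) (𝓝 4) := by
    have := (hid.const_add 1).const_mul 2
    norm_num at this
    exact this
  have hd : Tendsto (fun H : ℝ => 1 + 2 * H) (𝓝[<] 1) (𝓝 3) := by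
    have := (hid.const_mul 2).const_add 1
    norm_num at this
    exact this
  have hQ := tendsto_quot hp hu (by filter_upwards [hH0] with H h; positivity)
  have hE1 : Tendsto (fun H : ℝ => Real.exp (-(H * (τ / (1 - H))))) (𝓝[<] 1) (𝓝 0) :=
    Real.tendsto_exp_neg_atTop_nhds_zero.comp (hid.pos_mul_atTop one_pos hs)
  have hE2 : Tendsto (fun H : ℝ => Real.exp (-((1 + H) * (τ / (1 - H))))) (𝓝[<] 1) (𝓝 0) :=
    Real.tendsto_exp_neg_atTop_nhds_zero.comp
      ((hid.const_add 1).pos_mul_atTop (by norm_num) hs)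
  have h := ((((hid.const_add 1).div hd (by norm_num)).mul hE1).sub
    (hE2.div (hd.const_mul 2) (by norm_num))).add
    ((hQ.const_mul (Real.exp (-τ))).div (hd.const_mul 2) (by norm_num))
  have e : (1 + 1) / 3 * 0 - 0 / (2 * 3) + Real.exp (-τ) * (4 * (4 - 1) / 2) / (2 * 3)
      = Real.exp (-τ) := by ring
  rw [e] at h
  refine h.congr' ?_
  filter_upwards [hH0, hH1] with H h0 h1
  have hne : 1 - H ≠ 0 := by linarith
  have hx : (H - 1) * (τ / (1 - H)) = -τ := by field_simp; ring
  rw [rhoIFBM_eq h0 (div_pos hτ (by linarith)), hx]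
  rfl
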